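/- For every multi-level apportionment instance, every non-negative integer h, and every tie-breaking, the allocation of h seats produced by the multi-level Adams' method fulfills upper quota. Moreover, the method satisfies house monotonicity: when the total number of seats increases from h to h+1, every node receives at least as many seats as before. -/

import Mathlib

/-- A multi-level apportionment instance: a rooted tree on nodes `0, …, n`
(root `0`, encoded by a parent function with `parent i < i` for `i ≠ 0`),
together with entitlements `W`. -/
structure MLA where
  n : ℕ
  parent : Fin (n + 1) → Fin (n + 1)
  parent_lt : ∀ i : Fin (n + 1), i ≠ 0 → (parent i : ℕ) < (i : ℕ)
  W : Fin (n + 1) → ℝ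
  W_pos : ∀ i, 0 < W i
  W_le_one : ∀ i, W i ≤ 1
  W_root : W 0 = 1
  W_sum : ∀ i : Fin (n + 1),
    (Finset.univ.filter (fun c => c ≠ 0 ∧ parent c = i)).Nonempty →
    ∑ c ∈ Finset.univ.filter (fun c => c ≠ 0 ∧ parent c = i), W c = 1

namespace MLA

variable (T : MLA)

/-- The set of children of node `i`. -/
def children (i : Fin (T.n + 1)) : Finset (Fin (T.n + 1)) :=
  Finset.univ.filter (fun c => c ≠ 0 ∧ T.parent c = i)

/-- The ancestor set `A(i)`: `A(0) = {0}` and `A(i) = {parent i} ∪ A(parent i)`. -/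
def ancestors (i : Fin (T.n + 1)) : Finset (Fin (T.n + 1)) :=
  if h : i = 0 then {0} else insert (T.parent i) (ancestors (T.parent i))
termination_by (i : ℕ)
decreasing_by exact T.parent_lt i h

/-- The entitlement of node `i` relative to the root: `R i = ∏_{a ∈ A(i) ∪ {i}} W a`. -/
def R (i : Fin (T.n + 1)) : ℝ := ∏ a ∈ insert i (T.ancestors i), T.W a

/-- `V` is an allocation of `h` seats. -/
def IsAlloc (h : ℕ) (V : Fin (T.n + 1) → ℕ) : Prop :=
  V 0 = h ∧ ∀ i, (T.children i).Nonempty → V i = ∑ c ∈ T.children i, V c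

/-- `V` fulfills lower quota: `V i ≥ LQ i = max_{a ∈ A(i)} ⌊(R i / R a) · V a⌋`. -/
def FulfillsLowerQuota (V : Fin (T.n + 1) → ℕ) : Prop :=
  ∀ i, ∀ a ∈ T.ancestors i, ⌊T.R i / T.R a * (V a : ℝ)⌋ ≤ (V i : ℤ)

/-- `V` fulfills upper quota: `V i ≤ UQ i = min_{a ∈ A(i)} ⌈(R i / R a) · V a⌉`. -/
def FulfillsUpperQuota (V : Fin (T.n + 1) → ℕ) : Prop :=
  ∀ i, ∀ a ∈ T.ancestors i, (V i : ℤ) ≤ ⌈T.R i / T.R a * (V a : ℝ)⌉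


/-- `P` is the set of nodes receiving the new seat in one step of an iterative
method with selection criterion `crit` (to be minimized among children) and
eligibility constraint `elig`: `P` is a root-to-leaf path, each non-root node on
the path is an eligible child of its parent minimizing `crit` among all eligible
children, and the seat counts along `P` each increase by one. -/
def IsStepWith (crit : (Fin (T.n + 1) → ℕ) → Fin (T.n + 1) → ℝ)
    (elig : (Fin (T.n + 1) → ℕ) → Fin (T.n + 1) → Prop)
    (P : Finset (Fin (T.n + 1))) (Vh Vh1 : Fin (T.n + 1) → ℕ) : Prop :=
  (0 : Fin (T.n + 1)) ∈ P ∧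
  (∀ i ∈ P, i ≠ 0 → T.parent i ∈ P) ∧
  (∀ i ∈ P, (T.children i).Nonempty → ∃ c ∈ T.children i, c ∈ P) ∧
  (∀ c ∈ P, ∀ d ∈ P, c ≠ 0 → d ≠ 0 → T.parent c = T.parent d → c = d) ∧
  (∀ c ∈ P, c ≠ 0 → elig Vh c ∧
    ∀ d ∈ T.children (T.parent c), elig Vh d → crit Vh c ≤ crit Vh d) ∧
  (∀ i, Vh1 i = Vh i + if i ∈ P then 1 else 0)

/-- `V : ℕ → (nodes → ℕ)` is a run of the iterative method given by `crit` and
`elig` (with arbitrary tie-breaking): `V 0` is the all-zero allocation and each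
`V (h+1)` is obtained from `V h` by allocating one more seat along a path. -/
def IsRun (crit : (Fin (T.n + 1) → ℕ) → Fin (T.n + 1) → ℝ)
    (elig : (Fin (T.n + 1) → ℕ) → Fin (T.n + 1) → Prop)
    (V : ℕ → Fin (T.n + 1) → ℕ) : Prop :=
  (∀ i, V 0 i = 0) ∧ ∀ h, ∃ P, T.IsStepWith crit elig P (V h) (V (h + 1))

/-- Adams' criterion: a child `c` minimizing `V c / R c` receives the seat. -/
noncomputable def adamsCrit (V : Fin (T.n + 1) → ℕ) (c : Fin (T.n + 1)) : ℝ :=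
  (V c : ℝ) / T.R c

/-- Jefferson's criterion: a child `c` minimizing `(V c + 1) / R c` receives the seat. -/
noncomputable def jeffersonCrit (V : Fin (T.n + 1) → ℕ) (c : Fin (T.n + 1)) : ℝ :=
  ((V c : ℝ) + 1) / T.R c

/-- Trivial eligibility constraint: every child is eligible. -/
def trivElig (_ : Fin (T.n + 1) → ℕ) (_ : Fin (T.n + 1)) : Prop := True

/-- Eligibility constraint of the quota method: `V c / W c < V (parent c) + 1`. -/
def quotaElig (V : Fin (T.n + 1) → ℕ) (c : Fin (T.n + 1)) : Prop :=
  (V c : ℝ) / T.W c < (V (T.parent c) : ℝ) + 1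

/-- Eligibility constraint of the upper-compliant quota method:
`V c / R c < (V a + 1) / R a` for every ancestor `a` of `c`. -/
def ucElig (V : Fin (T.n + 1) → ℕ) (c : Fin (T.n + 1)) : Prop :=
  ∀ a ∈ T.ancestors c, (V c : ℝ) / T.R c < ((V a : ℝ) + 1) / T.R a

end MLA

namespace MLA

lemma anc_root (T : MLA) : T.ancestors 0 = {0} := by
  rw [ancestors]; simp

lemma anc_succ (T : MLA) (i : Fin (T.n + 1)) (h : i ≠ 0) :
    T.ancestors i = insert (T.parent i) (T.ancestors (T.parent i)) := by
  rw [ancestors]; simp [h]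

lemma tree_ind (T : MLA) (p : Fin (T.n + 1) → Prop) (h0 : p 0)
    (hs : ∀ i, i ≠ 0 → p (T.parent i) → p i) : ∀ i, p i := by
  have key : ∀ m : ℕ, ∀ i : Fin (T.n + 1), (i : ℕ) = m → p i := by
    intro m
    induction m using Nat.strong_induction_on with
    | _ m ih =>
      intro i hi
      by_cases h : i = 0
      · exact h ▸ h0
      · exact hs i h (ih _ (hi ▸ T.parent_lt i h) _ rfl)
  exact fun i => key _ i rfl

lemma anc_le (T : MLA) : ∀ i, ∀ a ∈ T.ancestors i, (a : ℕ) ≤ (i : ℕ) := by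
  apply T.tree_ind
  · intro a ha
    rw [anc_root, Finset.mem_singleton] at ha
    rw [ha]
  · intro i hi ih a ha
    rw [anc_succ T i hi, Finset.mem_insert] at ha
    have := T.parent_lt i hi
    rcases ha with rfl | ha
    · exact this.le
    · exact (ih a ha).trans this.le

lemma R_succ (T : MLA) (c : Fin (T.n + 1)) (h : c ≠ 0) :
    T.R c = T.W c * T.R (T.parent c) := by
  have hl := T.parent_lt c h
  unfold R
  rw [anc_succ T c h, Finset.prod_insert]
  intro hc
  rw [Finset.mem_insert] at hc
  rcases hc with hc | hc
  · rw [← hc] at hl; exact lt_irrefl _ hl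
  · exact absurd (T.anc_le _ _ hc) (not_le.2 hl)

lemma R_pos (T : MLA) (i : Fin (T.n + 1)) : 0 < T.R i :=
  Finset.prod_pos fun a _ => T.W_pos a

lemma mem_children (T : MLA) (i c : Fin (T.n + 1)) :
    c ∈ T.children i ↔ c ≠ 0 ∧ T.parent c = i := by
  simp [children]

lemma R_sum (T : MLA) (i : Fin (T.n + 1)) (h : (T.children i).Nonempty) :
    ∑ c ∈ T.children i, T.R c = T.R i := by
  have h1 : ∑ c ∈ T.children i, T.R c = ∑ c ∈ T.children i, T.W c * T.R i := by
    refine Finset.sum_congr rfl fun c hc => ?_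
    obtain ⟨h0, hp⟩ := (T.mem_children i c).1 hc
    rw [T.R_succ c h0, hp]
  have h2 : ∑ c ∈ T.children i, T.W c = 1 := T.W_sum i h
  rw [h1, ← Finset.sum_mul, h2, one_mul]

lemma run_sum (T : MLA) (V : ℕ → Fin (T.n + 1) → ℕ)
    (hrun : T.IsRun T.adamsCrit T.trivElig V) (h : ℕ) (i : Fin (T.n + 1))
    (hi : (T.children i).Nonempty) : V h i = ∑ c ∈ T.children i, V h c := by
  induction h with
  | zero => simp [hrun.1]
  | succ h ih =>
    obtain ⟨P, h0, hpar, hch, huniq, hmin, hV⟩ := hrun.2 h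
    simp only [hV, Finset.sum_add_distrib, ← ih]
    congr 1
    by_cases hP : i ∈ P
    · obtain ⟨c, hc, hcP⟩ := hch i hP hi
      have hc' := (T.mem_children i c).1 hc
      rw [Finset.sum_eq_single c]
      · simp [hP, hcP]
      · intro d hd hdc
        have hd' := (T.mem_children i d).1 hd
        rw [if_neg]
        intro hdP
        exact hdc (huniq d hdP c hcP hd'.1 hc'.1 (hd'.2.trans hc'.2.symm))
      · intro hn; exact absurd hc hn
    · rw [if_neg hP, Finset.sum_eq_zero]
      intro d hd
      have hd' := (T.mem_children i d).1 hd
      rw [if_neg]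
      intro hdP
      exact hP (hd'.2 ▸ hpar d hdP hd'.1)

lemma step_ratio (T : MLA) (U U1 : Fin (T.n + 1) → ℕ) (P : Finset (Fin (T.n + 1)))
    (hsum : ∀ i, (T.children i).Nonempty → U i = ∑ c ∈ T.children i, U c)
    (hst : T.IsStepWith T.adamsCrit T.trivElig P U U1) :
    ∀ c, c ∈ P → ∀ a ∈ T.ancestors c, a ∈ P ∧ (U c : ℝ) / T.R c ≤ (U a : ℝ) / T.R a := by
  obtain ⟨h0, hpar, hch, huniq, hmin, hV⟩ := hst
  apply T.tree_ind
  · intro _ a ha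
    rw [anc_root, Finset.mem_singleton] at ha
    subst ha
    exact ⟨h0, le_rfl⟩
  · intro c hc ih hcP a ha
    have hpP := hpar c hcP hc
    have hcc : c ∈ T.children (T.parent c) := (T.mem_children _ _).2 ⟨hc, rfl⟩
    have hle : (U c : ℝ) / T.R c ≤ (U (T.parent c) : ℝ) / T.R (T.parent c) := by
      rw [le_div_iff₀ (T.R_pos _), ← T.R_sum _ ⟨c, hcc⟩, hsum _ ⟨c, hcc⟩, Finset.mul_sum]
      push_cast
      refine Finset.sum_le_sum fun d hd => ?_
      rw [← le_div_iff₀ (T.R_pos d)]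
      exact (hmin c hcP hc).2 d hd trivial
    rw [anc_succ T c hc, Finset.mem_insert] at ha
    rcases ha with rfl | ha
    · exact ⟨hpP, hle⟩
    · obtain ⟨h1, h2⟩ := ih hpP a ha
      exact ⟨h1, hle.trans h2⟩

lemma run_upper (T : MLA) (V : ℕ → Fin (T.n + 1) → ℕ)
    (hrun : T.IsRun T.adamsCrit T.trivElig V) (h : ℕ) (i a : Fin (T.n + 1))
    (ha : a ∈ T.ancestors i) :
    (V h i : ℝ) < T.R i / T.R a * (V h a : ℝ) + 1 := by
  have hq : 0 < T.R i / T.R a := div_pos (T.R_pos i) (T.R_pos a)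
  induction h with
  | zero => simp [hrun.1]
  | succ h ih =>
    obtain ⟨P, hst⟩ := hrun.2 h
    have hV := hst.2.2.2.2.2
    by_cases hP : i ∈ P
    · obtain ⟨haP, hr⟩ := T.step_ratio _ _ P (T.run_sum V hrun h) hst i hP a ha
      rw [div_le_iff₀ (T.R_pos i)] at hr
      have e : (V h a : ℝ) / T.R a * T.R i = T.R i / T.R a * (V h a : ℝ) := by ring
      rw [e] at hr
      rw [hV i, hV a, if_pos hP, if_pos haP]
      push_cast
      linarith
    · rw [hV i, if_neg hP, add_zero]
      have : (V h a : ℝ) ≤ (V (h + 1) a : ℝ) := by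
        rw [hV a]; push_cast; split_ifs <;> simp
      have := mul_le_mul_of_nonneg_left this hq.le
      linarith

end MLA

/-- Any run of the multi-level Adams' method fulfills upper
quota after every number of seats, and satisfies house monotonicity. -/
theorem adams_upper_quota_and_house_monotone (T : MLA) (V : ℕ → Fin (T.n + 1) → ℕ)
    (hrun : T.IsRun T.adamsCrit T.trivElig V) :
    (∀ h : ℕ, T.FulfillsUpperQuota (V h)) ∧ (∀ h : ℕ, ∀ i, V h i ≤ V (h + 1) i) := by
  constructor
  · intro h i a ha
    have h1 := T.run_upper V hrun h i a ha
    have h2 := Int.le_ceil (T.R i / T.R a * (V h a : ℝ))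
    have h3 : ((V h i : ℤ) : ℝ) < ((⌈T.R i / T.R a * (V h a : ℝ)⌉ + 1 : ℤ) : ℝ) := by
      push_cast
      linarith
    exact Int.lt_add_one_iff.1 (Int.cast_lt.1 h3)
  · intro h i
    obtain ⟨P, hst⟩ := hrun.2 h
    rw [hst.2.2.2.2.2 i]
    exact Nat.le_add_right _ _
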